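/- Let n ≥ 1, α > 0, a₁ > 1, and let f_* : Γₙ⁺ → (0,∞) be homogeneous of degree one with f_*(1,…,1) = 1. Set t̃ = t + (1+α)⁻¹. Then the function v(ξ,t) = −a₁[(1+α)t̃]^{1/(1+α)}·√(1−|ξ|²) is a strict subsolution of the dual flow: ∂ₜv < −F_*(A*[v(·,t)])^{−α}·w* at every (ξ,t) ∈ B₁×(0,∞). -/

import Mathlib

open Real Filter Set

noncomputable section

/-- Partial derivative of `u` in the `i`-th coordinate direction. -/
def pd (n : ℕ) (u : (Fin n → ℝ) → ℝ) (i : Fin n) (x : Fin n → ℝ) : ℝ :=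
  fderiv ℝ u x (Pi.single i 1)

/-- Hessian matrix of `u`. -/
def hess (n : ℕ) (u : (Fin n → ℝ) → ℝ) (x : Fin n → ℝ) : Matrix (Fin n) (Fin n) ℝ :=
  Matrix.of fun i j => pd n (pd n u j) i x

/-- Squared Euclidean norm of the gradient. -/
def gradSq (n : ℕ) (u : (Fin n → ℝ) → ℝ) (x : Fin n → ℝ) : ℝ :=
  ∑ i, (pd n u i x) ^ 2

/-- `w = √(1 - |Du|²)`. -/
def wF (n : ℕ) (u : (Fin n → ℝ) → ℝ) (x : Fin n → ℝ) : ℝ :=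
  Real.sqrt (1 - gradSq n u x)

/-- `γ^{ik} = δ_{ik} + u_i u_k / (w (1 + w))`. -/
def gammaM (n : ℕ) (u : (Fin n → ℝ) → ℝ) (x : Fin n → ℝ) : Matrix (Fin n) (Fin n) ℝ :=
  Matrix.of fun i k =>
    (if i = k then (1 : ℝ) else 0) + pd n u i x * pd n u k x / (wF n u x * (1 + wF n u x))

/-- The principal-curvature matrix `A[u] = (1/w) γ (D²u) γ`. -/
def curvM (n : ℕ) (u : (Fin n → ℝ) → ℝ) (x : Fin n → ℝ) : Matrix (Fin n) (Fin n) ℝ :=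
  (wF n u x)⁻¹ • (gammaM n u x * hess n u x * gammaM n u x)

/-- The positive cone `Γₙ⁺`. -/
def GammaPlus (n : ℕ) : Set (Fin n → ℝ) := {κ | ∀ i, 0 < κ i}

/-- `F(A) = 1 / f_*(κ₁⁻¹, …, κₙ⁻¹)` where `κᵢ` are the eigenvalues of `A`. -/
def Fc (n : ℕ) (fstar : (Fin n → ℝ) → ℝ) (A : Matrix (Fin n) (Fin n) ℝ) : ℝ :=
  if h : A.IsHermitian then 1 / fstar (fun i => (h.eigenvalues i)⁻¹) else 0

/-- `F_*(A) = f_*(eigenvalues of A)`. -/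
def FsM (n : ℕ) (fstar : (Fin n → ℝ) → ℝ) (A : Matrix (Fin n) (Fin n) ℝ) : ℝ :=
  if h : A.IsHermitian then fstar h.eigenvalues else 0

/-- `w* = √(1 - |ξ|²)`. -/
def wS (n : ℕ) (ξ : Fin n → ℝ) : ℝ := Real.sqrt (1 - ∑ i, (ξ i) ^ 2)

/-- `γ*_{ik} = δ_{ik} - ξᵢ ξ_k / (1 + w*)`. -/
def gammaS (n : ℕ) (ξ : Fin n → ℝ) : Matrix (Fin n) (Fin n) ℝ :=
  Matrix.of fun i k => (if i = k then (1 : ℝ) else 0) - ξ i * ξ k / (1 + wS n ξ)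

/-- The dual curvature matrix `A*[u*] = w* γ* (D²u*) γ*`. -/
def dualCurvM (n : ℕ) (ustar : (Fin n → ℝ) → ℝ) (ξ : Fin n → ℝ) :
    Matrix (Fin n) (Fin n) ℝ :=
  wS n ξ • (gammaS n ξ * hess n ustar ξ * gammaS n ξ)

/-- Open Euclidean ball of radius `r` about the origin. -/
def ballE (n : ℕ) (r : ℝ) : Set (Fin n → ℝ) := {ξ | ∑ i, (ξ i) ^ 2 < r ^ 2}

/-- Closed Euclidean ball of radius `r` about the origin. -/
def cballE (n : ℕ) (r : ℝ) : Set (Fin n → ℝ) := {ξ | ∑ i, (ξ i) ^ 2 ≤ r ^ 2}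

/-- Euclidean sphere of radius `r` about the origin. -/
def sphereE (n : ℕ) (r : ℝ) : Set (Fin n → ℝ) := {ξ | ∑ i, (ξ i) ^ 2 = r ^ 2}

/-- The full structural conditions on the curvature function `f_*`. -/
def FullStructural (n : ℕ) (fstar : (Fin n → ℝ) → ℝ) : Prop :=
  ContDiffOn ℝ (⊤ : ℕ∞) fstar (GammaPlus n) ∧
  ConcaveOn ℝ (GammaPlus n) fstar ∧
  (∀ κ ∈ GammaPlus n, 0 < fstar κ) ∧
  (∀ κ ∈ frontier (GammaPlus n), fstar κ = 0) ∧
  (∀ κ ∈ GammaPlus n, ∀ i, 0 < fderiv ℝ fstar κ (Pi.single i 1)) ∧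
  (∀ c : ℝ, 0 < c → ∀ κ ∈ GammaPlus n, fstar (c • κ) = c * fstar κ) ∧
  (∃ ε₀ > (0 : ℝ), ∀ κ ∈ GammaPlus n,
    ε₀ * fstar κ * (∑ i, κ i) ≤ ∑ i, fderiv ℝ fstar κ (Pi.single i 1) * (κ i) ^ 2) ∧
  (∀ C > (0 : ℝ), ∀ E : Set (Fin n → ℝ), IsCompact E → E ⊆ GammaPlus n →
    ∀ i₀ : Fin n, ∃ R > (0 : ℝ), ∀ κ ∈ E, C < fstar (Function.update κ i₀ (κ i₀ + R))) ∧
  fstar (fun _ => 1) = 1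

/-- Conditions A on the initial hypersurface. -/
def ConditionsA (n : ℕ) (u₀ : (Fin n → ℝ) → ℝ) (C₀ C₁ : ℝ) : Prop :=
  ContDiff ℝ (⊤ : ℕ∞) u₀ ∧
  (∀ x, gradSq n u₀ x < 1) ∧
  (∀ x, (hess n u₀ x).PosDef) ∧
  (∀ k : ℕ, ∀ i j : Fin n, ∃ M : ℝ, ∀ x,
      ‖iteratedFDeriv ℝ k (fun y => curvM n u₀ y i j) x‖ ≤ M) ∧
  (∀ x, Real.sqrt ((∑ i, (x i) ^ 2) + C₀) < u₀ x ∧ u₀ x < Real.sqrt ((∑ i, (x i) ^ 2) + C₁))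

/-!
The function `-r √(1 - |ξ|²)` is the Legendre transform of the hyperboloid of radius `r`, and its
dual curvature matrix is `r` times the identity: the Hessian of `w*` is `-w*⁻¹ (I + w*⁻² ξξᵀ)`,
while `γ*² = I - ξξᵀ` is the inverse of `I + w*⁻² ξξᵀ`. So `-r(t) w*` is a strict subsolution of
the dual flow as soon as `r' > r ^ (-α)`, and the radius `r = a [(1 + α) t̃] ^ (1 / (1 + α))`
satisfies `r' = a ^ (1 + α) r ^ (-α)`.
-/

section Matrices

open Matrix

lemma isHermitian_smul_one {ι 𝕜 : Type*} [DecidableEq ι] [RCLike 𝕜] (c : ℝ) :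
    (c • (1 : Matrix ι ι 𝕜)).IsHermitian :=
  isHermitian_one.smul (IsSelfAdjoint.all c)

lemma eigenvalues_smul_one {ι 𝕜 : Type*} [Fintype ι] [DecidableEq ι] [RCLike 𝕜] (c : ℝ)
    (h : (c • (1 : Matrix ι ι 𝕜)).IsHermitian) : h.eigenvalues = fun _ => c := by
  funext i
  have : Nonempty ι := ⟨i⟩
  have hspec : spectrum ℝ (c • (1 : Matrix ι ι 𝕜)) = {c} := by
    rw [← Algebra.algebraMap_eq_smul_one, spectrum.scalar_eq]
  exact hspec.subset (h.eigenvalues_mem_spectrum_real i)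

lemma vecMulVec_self_mul_self {ι R : Type*} [Fintype ι] [CommSemiring R] (x : ι → R) :
    vecMulVec x x * vecMulVec x x = (x ⬝ᵥ x) • vecMulVec x x := by
  rw [vecMulVec_mul_vecMulVec, vecMulVec_smul]

lemma one_add_smul_vecMulVec_mul_one_sub {ι K : Type*} [Fintype ι] [DecidableEq ι] [Field K]
    {x : ι → K} (hx : 1 - x ⬝ᵥ x ≠ 0) :
    (1 + (1 - x ⬝ᵥ x)⁻¹ • vecMulVec x x) * (1 - vecMulVec x x) = 1 := by
  simp only [add_mul, mul_sub, one_mul, mul_one, smul_mul_assoc, vecMulVec_self_mul_self]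
  match_scalars <;> field_simp
  ring

end Matrices

lemma FsM_smul_one {n : ℕ} (f : (Fin n → ℝ) → ℝ) (c : ℝ) :
    FsM n f (c • 1) = f fun _ => c := by
  rw [FsM, dif_pos (isHermitian_smul_one c), eigenvalues_smul_one]

lemma apply_const_of_homogeneous {n : ℕ} (f : (Fin n → ℝ) → ℝ)
    (hhom : ∀ c : ℝ, 0 < c → ∀ κ ∈ GammaPlus n, f (c • κ) = c * f κ)
    (hnorm : f (fun _ => 1) = 1) {c : ℝ} (hc : 0 < c) : f (fun _ => c) = c := by
  have h := hhom c hc (fun _ => 1) fun _ => one_pos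
  simpa only [Pi.smul_def, smul_eq_mul, mul_one, hnorm] using h

section Scaling

variable {n : ℕ} (c : ℝ) (u : (Fin n → ℝ) → ℝ)

lemma pd_const_smul (i : Fin n) : pd n (c • u) i = c • pd n u i := by
  funext ξ
  simp only [pd, fderiv_const_smul_field, Pi.smul_apply, _root_.smul_apply]

lemma hess_const_smul (ξ : Fin n → ℝ) : hess n (c • u) ξ = c • hess n u ξ := by
  ext i j
  simp only [hess, Matrix.of_apply, Matrix.smul_apply, pd_const_smul, Pi.smul_apply]

lemma dualCurvM_const_smul (ξ : Fin n → ℝ) :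
    dualCurvM n (c • u) ξ = c • dualCurvM n u ξ := by
  rw [dualCurvM, hess_const_smul, Matrix.mul_smul, Matrix.smul_mul, smul_comm, dualCurvM]

end Scaling

section Hyperboloid

open Matrix

variable {n : ℕ} {ξ : Fin n → ℝ}

lemma isOpen_ballE (n : ℕ) (r : ℝ) : IsOpen (ballE n r) :=
  isOpen_lt (by fun_prop) continuous_const

lemma ballE_subset_cballE (n : ℕ) (r : ℝ) : ballE n r ⊆ cballE n r :=
  fun _ hξ => le_of_lt (mem_ofPred.1 hξ)

lemma wS_pos (hξ : ξ ∈ ballE n 1) : 0 < wS n ξ :=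
  Real.sqrt_pos.2 (by simpa [ballE] using hξ)

lemma sq_wS (hξ : ξ ∈ cballE n 1) : wS n ξ ^ 2 = 1 - ξ ⬝ᵥ ξ := by
  rw [wS, Real.sq_sqrt (by simpa [cballE] using hξ)]
  simp only [dotProduct, sq]

lemma hasFDerivAt_wS (hξ : ξ ∈ ballE n 1) :
    HasFDerivAt (wS n)
      (-(wS n ξ)⁻¹ • ∑ i, ξ i • ContinuousLinearMap.proj (R := ℝ) (φ := fun _ => ℝ) i) ξ := by
  have hsum : HasFDerivAt (fun η : Fin n → ℝ => ∑ i, η i ^ 2)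
      (∑ i, (2 * ξ i) • ContinuousLinearMap.proj (R := ℝ) (φ := fun _ => ℝ) i) ξ :=
    HasFDerivAt.fun_sum fun i _ => by
      simpa using (ContinuousLinearMap.proj (R := ℝ) (φ := fun _ => ℝ) i).hasFDerivAt.pow 2
  have hne : 1 - ∑ i, ξ i ^ 2 ≠ 0 := (Real.sqrt_pos.1 (wS_pos hξ)).ne'
  refine ((hsum.const_sub 1).sqrt hne).congr_fderiv ?_
  ext y
  simp [← wS.eq_def, mul_assoc, ← Finset.mul_sum]

lemma pd_wS (hξ : ξ ∈ ballE n 1) (j : Fin n) : pd n (wS n) j ξ = -(wS n ξ)⁻¹ * ξ j := by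
  rw [pd, (hasFDerivAt_wS hξ).fderiv]
  simp [Pi.single_apply]

lemma hess_wS (hξ : ξ ∈ ballE n 1) :
    hess n (wS n) ξ = -(wS n ξ)⁻¹ • (1 + (wS n ξ ^ 2)⁻¹ • vecMulVec ξ ξ) := by
  ext i j
  have hpd : pd n (wS n) j =ᶠ[nhds ξ] fun η => -(wS n η)⁻¹ * η j := by
    filter_upwards [(isOpen_ballE n 1).mem_nhds hξ] with η hη using pd_wS hη j
  have hw := wS_pos hξ
  have hinv := ((hasDerivAt_inv hw.ne').comp_hasFDerivAt ξ
    (hasFDerivAt_wS hξ).differentiableAt.hasFDerivAt).neg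
  have hderiv := (hinv.mul (hasFDerivAt_apply j ξ)).congr_of_eventuallyEq hpd
  have hdir : fderiv ℝ (wS n) ξ (Pi.single i 1) = -(wS n ξ)⁻¹ * ξ i := pd_wS hξ i
  rw [hess, of_apply, pd, hderiv.fderiv]
  simp only [_root_.add_apply, _root_.neg_apply, _root_.smul_apply, Pi.neg_apply,
    Function.comp_apply, ContinuousLinearMap.proj_apply, Pi.single_apply, eq_comm (a := j), hdir,
    Matrix.smul_apply, Matrix.add_apply, one_apply, vecMulVec_apply, smul_eq_mul]
  split_ifs <;> field_simp <;> ring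

lemma gammaS_eq (ξ : Fin n → ℝ) : gammaS n ξ = 1 - (1 + wS n ξ)⁻¹ • vecMulVec ξ ξ := by
  ext i j
  simp [gammaS, vecMulVec_apply, one_apply, div_eq_inv_mul]

lemma gammaS_mul_self (hξ : ξ ∈ cballE n 1) :
    gammaS n ξ * gammaS n ξ = 1 - vecMulVec ξ ξ := by
  have hw : 1 + wS n ξ ≠ 0 := (add_pos_of_pos_of_nonneg one_pos (Real.sqrt_nonneg _)).ne'
  have hdot : ξ ⬝ᵥ ξ = 1 - wS n ξ ^ 2 := by rw [sq_wS hξ, sub_sub_cancel]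
  simp only [gammaS_eq, sub_mul, mul_sub, one_mul, mul_one, smul_mul_assoc, mul_smul_comm,
    vecMulVec_self_mul_self, hdot]
  match_scalars <;> field_simp
  ring

lemma commute_gammaS_vecMulVec (ξ : Fin n → ℝ) : Commute (gammaS n ξ) (vecMulVec ξ ξ) := by
  rw [gammaS_eq]
  exact (Commute.one_left _).sub_left ((Commute.refl _).smul_left _)

lemma dualCurvM_wS (hξ : ξ ∈ ballE n 1) : dualCurvM n (wS n) ξ = -1 := by
  have hw := wS_pos hξ
  have hsq := sq_wS (ballE_subset_cballE n 1 hξ)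
  have hcomm : Commute (gammaS n ξ) (1 + (wS n ξ ^ 2)⁻¹ • vecMulVec ξ ξ) :=
    (Commute.one_right _).add_right ((commute_gammaS_vecMulVec ξ).smul_right _)
  have hinv : gammaS n ξ * (1 + (wS n ξ ^ 2)⁻¹ • vecMulVec ξ ξ) * gammaS n ξ = 1 := by
    rw [hcomm.eq, mul_assoc, gammaS_mul_self (ballE_subset_cballE n 1 hξ), hsq]
    exact one_add_smul_vecMulVec_mul_one_sub (hsq ▸ (pow_pos hw 2).ne')
  rw [dualCurvM, hess_wS hξ, Matrix.mul_smul, Matrix.smul_mul, hinv, smul_smul, mul_neg,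
    mul_inv_cancel₀ hw.ne', neg_one_smul]

lemma FsM_dualCurvM_neg_mul_wS (f : (Fin n → ℝ) → ℝ) (r : ℝ) (hξ : ξ ∈ ballE n 1) :
    FsM n f (dualCurvM n (fun η => -r * wS n η) ξ) = f fun _ => r := by
  have hsmul : (fun η => -r * wS n η) = (-r) • wS n := rfl
  rw [hsmul, dualCurvM_const_smul, dualCurvM_wS hξ, smul_neg, neg_smul, neg_neg, FsM_smul_one]

lemma deriv_neg_mul_wS_lt {f : (Fin n → ℝ) → ℝ} {α t r' : ℝ} {r : ℝ → ℝ}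
    (hf : f (fun _ => r t) = r t) (hr : HasDerivAt r r' t) (hlt : r t ^ (-α) < r')
    (hξ : ξ ∈ ballE n 1) :
    deriv (fun s => -r s * wS n ξ) t
      < -(FsM n f (dualCurvM n (fun η => -r t * wS n η) ξ)) ^ (-α) * wS n ξ := by
  rw [FsM_dualCurvM_neg_mul_wS f (r t) hξ, hf, (hr.fun_neg.mul_const (wS n ξ)).deriv]
  exact mul_lt_mul_of_pos_right (neg_lt_neg hlt) (wS_pos hξ)

end Hyperboloid

/-- The radius `a [(1 + α) t̃] ^ (1 / (1 + α))`, with `t̃ = t + (1 + α)⁻¹`, at time `t` of the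
expanding hyperboloid whose Legendre transform is the barrier `v`. -/
def barrierRadius (α a t : ℝ) : ℝ :=
  a * ((1 + α) * (t + (1 + α)⁻¹)) ^ (1 / (1 + α))

namespace barrierRadius

variable {α a t : ℝ}

lemma base_pos (hα : -1 < α) (ht : -(1 + α)⁻¹ < t) : 0 < (1 + α) * (t + (1 + α)⁻¹) :=
  mul_pos (by linarith) (by linarith)

lemma pos (hα : -1 < α) (ha : 0 < a) (ht : -(1 + α)⁻¹ < t) : 0 < barrierRadius α a t :=
  mul_pos ha (Real.rpow_pos_of_pos (base_pos hα ht) _)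

lemma hasDerivAt (hα : -1 < α) (ha : 0 < a) (ht : -(1 + α)⁻¹ < t) :
    HasDerivAt (barrierRadius α a) (a ^ (1 + α) * barrierRadius α a t ^ (-α)) t := by
  have hα' : 1 + α ≠ 0 := by linarith
  have hbase := base_pos hα ht
  have hlin : HasDerivAt (fun s : ℝ => (1 + α) * (s + (1 + α)⁻¹)) (1 + α) t := by
    simpa using ((hasDerivAt_id t).add_const (1 + α)⁻¹).const_mul (1 + α)
  have hexp : 1 / (1 + α) * -α = 1 / (1 + α) - 1 := by
    field_simp
    ring
  have ha_pow : a ^ (1 + α) * a ^ (-α) = a := by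
    rw [← Real.rpow_add ha, add_neg_cancel_right, Real.rpow_one]
  refine ((hlin.rpow_const (p := 1 / (1 + α)) (Or.inl hbase.ne')).const_mul a).congr_deriv ?_
  rw [barrierRadius, Real.mul_rpow ha.le (Real.rpow_nonneg hbase.le _),
    ← Real.rpow_mul hbase.le, hexp,
    ← mul_assoc (a ^ (1 + α)), ha_pow, mul_one_div_cancel hα', one_mul]

end barrierRadius

theorem statement8_general (n : ℕ) (α : ℝ) (hα : -1 < α) (a₁ : ℝ) (ha₁ : 1 < a₁)
    (fstar : (Fin n → ℝ) → ℝ) (hdiag : ∀ c : ℝ, 0 < c → fstar (fun _ => c) = c)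
    (v : (Fin n → ℝ) → ℝ → ℝ)
    (hv : v = fun ξ t =>
      -a₁ * (((1 + α) * (t + (1 + α)⁻¹)) ^ ((1 : ℝ) / (1 + α))) *
        Real.sqrt (1 - ∑ i, (ξ i) ^ 2)) :
    ∀ ξ ∈ ballE n 1, ∀ t : ℝ, -(1 + α)⁻¹ < t →
      deriv (fun s => v ξ s) t
        < -(FsM n fstar (dualCurvM n (fun η => v η t) ξ)) ^ (-α) * wS n ξ := by
  intro ξ hξ t ht
  have ha₁_pos : 0 < a₁ := one_pos.trans ha₁
  have hr_pos := barrierRadius.pos hα ha₁_pos ht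
  have hv_eq : v = fun ξ t => -barrierRadius α a₁ t * wS n ξ := by
    simp only [hv, barrierRadius, wS, neg_mul]
  have hgrowth : barrierRadius α a₁ t ^ (-α) < a₁ ^ (1 + α) * barrierRadius α a₁ t ^ (-α) :=
    lt_mul_of_one_lt_left (Real.rpow_pos_of_pos hr_pos _)
      (Real.one_lt_rpow ha₁ (by linarith))
  rw [hv_eq]
  exact deriv_neg_mul_wS_lt (hdiag _ hr_pos) (barrierRadius.hasDerivAt hα ha₁_pos ht) hgrowth hξ

/-- With `t̃ = t + (1+α)⁻¹` and `a₁ > 1`, the function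
`v(ξ,t) = −a₁[(1+α)t̃]^{1/(1+α)}√(1−|ξ|²)` is a strict subsolution of the dual flow:
`∂ₜv < −F_*(A*[v])^{−α} w*` on `B₁ × (0,∞)`. -/
theorem statement8 (n : ℕ) (hn : 1 ≤ n) (α : ℝ) (hα : 0 < α)
    (a₁ : ℝ) (ha₁ : 1 < a₁)
    (fstar : (Fin n → ℝ) → ℝ)
    (hpos : ∀ κ ∈ GammaPlus n, 0 < fstar κ)
    (hhom : ∀ c : ℝ, 0 < c → ∀ κ ∈ GammaPlus n, fstar (c • κ) = c * fstar κ)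
    (hnorm : fstar (fun _ => 1) = 1)
    (v : (Fin n → ℝ) → ℝ → ℝ)
    (hv : v = fun ξ t =>
      -a₁ * (((1 + α) * (t + (1 + α)⁻¹)) ^ ((1 : ℝ) / (1 + α))) *
        Real.sqrt (1 - ∑ i, (ξ i) ^ 2)) :
    ∀ ξ ∈ ballE n 1, ∀ t : ℝ, 0 < t →
      deriv (fun s => v ξ s) t
        < -(FsM n fstar (dualCurvM n (fun η => v η t) ξ)) ^ (-α) * wS n ξ := by
  intro ξ hξ t ht
  exact statement8_general n α (by linarith) a₁ ha₁ fstar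
    (fun c hc => apply_const_of_homogeneous fstar hhom hnorm hc) v hv ξ hξ t
    (by linarith [inv_pos.2 (by linarith : 0 < 1 + α)])

end
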